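/- Let G be an additive commutative group and R a G-graded commutative ring. Then R is noetherian as a G-graded ring (i.e., every ascending chain of graded ideals of R is eventually stationary) if and only if for every countable family (M_i)_{i∈ℕ} of injective objects of GrMod^G(R), the direct sum ⊕_{i∈ℕ} M_i is an injective object of GrMod^G(R). -/

import Mathlib

/-!
Common vocabulary: internally graded rings and modules, coarsening of gradings,
graded morphisms, and derived notions (injectivity, cogenerators, smallness, ...),
following Rohrer, "Coarsenings, injectives and Hom functors".
-/

open DirectSum

section Defs

variable {G H R : Type} [AddCommGroup G] [AddCommGroup H] [CommRing R]

/-- The `ψ`-coarsening of a `G`-grading: `(ℳ_[ψ])_h = ⨁_{g ∈ ψ⁻¹(h)} ℳ_g`. -/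
def coarsen {M : Type} [AddCommGroup M] (ψ : G →+ H) (ℳ : G → AddSubgroup M) (h : H) :
    AddSubgroup M :=
  ⨆ g ∈ ψ ⁻¹' {h}, ℳ g

/-- `(R, 𝒜)` is a `G`-graded commutative ring: the `𝒜 g` are additive subgroups whose
internal direct sum is `R`, and `𝒜 g * 𝒜 h ⊆ 𝒜 (g + h)`. -/
def IsGradedRing (𝒜 : G → AddSubgroup R) : Prop :=
  (1 : R) ∈ 𝒜 0 ∧
  (∀ {g h : G} {a b : R}, a ∈ 𝒜 g → b ∈ 𝒜 h → a * b ∈ 𝒜 (g + h)) ∧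
  (letI := Classical.decEq G; DirectSum.IsInternal 𝒜)

/-- `(M, ℳ)` is a `G`-graded module over the `G`-graded ring `(R, 𝒜)`. -/
def IsGradedModule {M : Type} [AddCommGroup M] [Module R M]
    (𝒜 : G → AddSubgroup R) (ℳ : G → AddSubgroup M) : Prop :=
  (∀ {g h : G} {r : R} {m : M}, r ∈ 𝒜 g → m ∈ ℳ h → r • m ∈ ℳ (g + h)) ∧
  (letI := Classical.decEq G; DirectSum.IsInternal ℳ)

/-- A morphism of `G`-graded `R`-modules is an `R`-linear map respecting the gradings. -/
def IsGradedHom {M N : Type} [AddCommGroup M] [Module R M]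
    [AddCommGroup N] [Module R N] (ℳ : G → AddSubgroup M) (𝒩 : G → AddSubgroup N)
    (f : M →ₗ[R] N) : Prop :=
  ∀ g : G, ∀ m ∈ ℳ g, f m ∈ 𝒩 g

/-- The grading of a direct sum of graded modules:
`(⨁_i N_i)_g` consists of the elements all of whose components lie in degree `g`. -/
def directSumGrading {ι : Type} {M : ι → Type}
    [∀ i, AddCommGroup (M i)] (ℳ : ∀ i, G → AddSubgroup (M i)) (g : G) :
    AddSubgroup (⨁ i, M i) where
  carrier := {x | ∀ i, x i ∈ ℳ i g}
  zero_mem' := fun i => by simp only [DirectSum.zero_apply, ZeroMemClass.zero_mem]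
  add_mem' := fun {x y} hx hy i => by
    rw [DirectSum.add_apply]; exact add_mem (hx i) (hy i)
  neg_mem' := fun {x} hx i => by
    rw [DFinsupp.neg_apply]; exact neg_mem (hx i)

/-- `(E, ℰ)` is an injective object of the category of `G`-graded `R`-modules:
every graded morphism into `E` extends along every injective graded morphism. -/
def IsInjectiveGradedModule (𝒜 : G → AddSubgroup R) {E : Type} [AddCommGroup E] [Module R E]
    (ℰ : G → AddSubgroup E) : Prop :=
  ∀ (A B : Type) [AddCommGroup A] [Module R A] [AddCommGroup B] [Module R B],
    ∀ (𝒮A : G → AddSubgroup A) (𝒮B : G → AddSubgroup B),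
      IsGradedModule 𝒜 𝒮A → IsGradedModule 𝒜 𝒮B →
      ∀ i : A →ₗ[R] B, Function.Injective i → IsGradedHom 𝒮A 𝒮B i →
      ∀ f : A →ₗ[R] E, IsGradedHom 𝒮A ℰ f →
      ∃ g : B →ₗ[R] E, IsGradedHom 𝒮B ℰ g ∧ g ∘ₗ i = f

/-- `(M, ℳ)` is a cogenerator of the category of `G`-graded `R`-modules: every nonzero
graded morphism is detected by a graded morphism into `M`. -/
def IsCogenerator (𝒜 : G → AddSubgroup R) {M : Type} [AddCommGroup M] [Module R M]
    (ℳ : G → AddSubgroup M) : Prop :=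
  ∀ (N N' : Type) [AddCommGroup N] [Module R N] [AddCommGroup N'] [Module R N'],
    ∀ (𝒩 : G → AddSubgroup N) (𝒩' : G → AddSubgroup N'),
      IsGradedModule 𝒜 𝒩 → IsGradedModule 𝒜 𝒩' →
      ∀ u : N →ₗ[R] N', IsGradedHom 𝒩 𝒩' u → u ≠ 0 →
      ∃ v : N' →ₗ[R] M, IsGradedHom 𝒩' ℳ v ∧ v ∘ₗ u ≠ 0

/-- `M` is a small graded module: every graded morphism from `M` into a direct sum of
graded modules factors through a finite sub-sum. -/
def IsSmall (𝒜 : G → AddSubgroup R) {M : Type} [AddCommGroup M] [Module R M]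
    (ℳ : G → AddSubgroup M) : Prop :=
  ∀ (ι : Type) (N : ι → Type) [∀ i, AddCommGroup (N i)] [∀ i, Module R (N i)],
    ∀ (𝒩 : ∀ i, G → AddSubgroup (N i)), (∀ i, IsGradedModule 𝒜 (𝒩 i)) →
      ∀ f : M →ₗ[R] ⨁ i, N i, IsGradedHom ℳ (directSumGrading 𝒩) f →
        ∃ s : Finset ι, ∀ (m : M) (i : ι), i ∉ s → f m i = 0

/-- `M` is `P`-small: every graded morphism from `M` into a direct sum of copies of `P`
factors through a finite sub-sum. -/
def IsSmallWrt {P : Type} [AddCommGroup P] [Module R P] (𝒬 : G → AddSubgroup P)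
    {M : Type} [AddCommGroup M] [Module R M] (ℳ : G → AddSubgroup M) : Prop :=
  ∀ (ι : Type) (f : M →ₗ[R] ⨁ (_ : ι), P),
    IsGradedHom ℳ (directSumGrading fun (_ : ι) => 𝒬) f →
      ∃ s : Finset ι, ∀ (m : M) (i : ι), i ∉ s → f m i = 0

/-- A `G`-graded ring is steady if all small graded modules over it are finitely generated. -/
def IsSteady (𝒜 : G → AddSubgroup R) : Prop :=
  ∀ (M : Type) [AddCommGroup M] [Module R M], ∀ ℳ : G → AddSubgroup M,
    IsGradedModule 𝒜 ℳ → IsSmall 𝒜 ℳ → Module.Finite R M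

/-- A graded ideal of the `G`-graded ring `(R, 𝒜)`: `I = ⨁_g (I ∩ R_g)`. -/
def IsGradedIdeal (𝒜 : G → AddSubgroup R) (I : Ideal R) : Prop :=
  I.toAddSubgroup = ⨆ g : G, I.toAddSubgroup ⊓ 𝒜 g

/-- A simple `G`-graded `R`-module: nonzero, and its only graded submodules are `0` and
the whole module. -/
def IsSimpleGradedModule (𝒜 : G → AddSubgroup R) {S : Type} [AddCommGroup S] [Module R S]
    (𝒮 : G → AddSubgroup S) : Prop :=
  IsGradedModule 𝒜 𝒮 ∧ Nontrivial S ∧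
    ∀ P : Submodule R S, (P.toAddSubgroup = ⨆ g : G, P.toAddSubgroup ⊓ 𝒮 g) →
      P = ⊥ ∨ P = ⊤

/-- The subgroup of `M →ₗ[R] N` consisting of the graded morphisms `M → N(g)`, i.e. the
degree-`g` component of the graded Hom module `⨁HOM(M, N)`. -/
def gradedHomSubgroup {M N : Type} [AddCommGroup M] [Module R M] [AddCommGroup N] [Module R N]
    (ℳ : G → AddSubgroup M) (𝒩 : G → AddSubgroup N) (g : G) : AddSubgroup (M →ₗ[R] N) where
  carrier := {u | ∀ g' : G, ∀ m ∈ ℳ g', u m ∈ 𝒩 (g + g')}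
  zero_mem' := fun g' m _ => by simp only [LinearMap.zero_apply, ZeroMemClass.zero_mem]
  add_mem' := fun {u v} hu hv g' m hm => by
    rw [LinearMap.add_apply]; exact add_mem (hu g' m hm) (hv g' m hm)
  neg_mem' := fun {u} hu g' m hm => by
    rw [LinearMap.neg_apply]; exact neg_mem (hu g' m hm)

end Defs

/-!
If `R` is graded noetherian, then a graded ideal `I` is small: a graded morphism `f : I ⟶ ⨁ M_i`
takes values in a finite subsum, since among the graded ideals of those `x ∈ I` whose image `f x` is
supported in a finite set `s`, as `s` varies, a maximal one contains all the others, and these cover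
`I`. Hence `⨁ M_i` inherits from the `M_i` the graded version of Baer's criterion, in which
morphisms `I ⟶ E(g)` are tested for all shifts `g`.

Conversely, write the members of a chain of graded ideals as `I_n = ker (w_n : R ⟶ F_n)` with
injective `F_n`, which can be taken to be cofree. On `J = ⋃ I_n` all but finitely many `w_n` vanish
at a given element, so the `w_n` define a morphism `J ⟶ ⨁ F_n`. If it extends to
`t : R ⟶ ⨁ F_n`, then for any `n` outside the support of `t 1` the map `w_n` vanishes on `J`, that
is `J ⊆ I_n`.
-/

section Decomposition

variable {ι κ R M N σ τ : Type*} [DecidableEq ι] [DecidableEq κ]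

section AddCommMonoid

variable [AddCommMonoid M] [SetLike σ M] [AddSubmonoidClass σ M] (ℳ : ι → σ) [Decomposition ℳ]
  [AddCommMonoid N]

theorem coe_decompose_map [SetLike τ N] [AddSubmonoidClass τ N] (𝒩 : κ → τ) [Decomposition 𝒩]
    {F : Type*} [FunLike F M N] [AddMonoidHomClass F M N] {f : F} {s : ι → κ}
    (hs : Function.Injective s) (hf : ∀ i, ∀ x ∈ ℳ i, f x ∈ 𝒩 (s i)) (x : M) (i : ι) :
    (decompose 𝒩 (f x) (s i) : N) = f (decompose ℳ x i) := by
  induction x using Decomposition.inductionOn ℳ with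
  | zero => simp
  | @homogeneous j x =>
    obtain rfl | hij := eq_or_ne j i
    · rw [decompose_of_mem_same 𝒩 (hf j x x.2), decompose_of_mem_same ℳ x.2]
    · rw [decompose_of_mem_ne 𝒩 (hf j x x.2) (hs.ne hij), decompose_of_mem_ne ℳ x.2 hij, map_zero]
  | add x y hx hy => simp [hx, hy]

theorem addMonoidHom_ext_of_homogeneous {f f' : M →+ N} (h : ∀ i, ∀ x ∈ ℳ i, f x = f' x) :
    f = f' := by
  ext x
  induction x using Decomposition.inductionOn ℳ with
  | zero => simp
  | homogeneous x => exact h _ x x.2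
  | add x y hx hy => rw [map_add, map_add, hx, hy]

end AddCommMonoid

theorem map_smul_of_homogeneous [Semiring R] [SetLike σ R] [AddSubmonoidClass σ R] (𝒜 : κ → σ)
    [Decomposition 𝒜] [AddCommMonoid M] [Module R M] [SetLike τ M] [AddSubmonoidClass τ M]
    (ℳ : ι → τ) [Decomposition ℳ] [AddCommMonoid N] [Module R N] {f : M →+ N}
    (hf : ∀ k i, ∀ a ∈ 𝒜 k, ∀ x ∈ ℳ i, f (a • x) = a • f x) (r : R) (x : M) :
    f (r • x) = r • f x := by
  induction r using Decomposition.inductionOn 𝒜 with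
  | zero => simp
  | add r s hr hs => simp only [add_smul, map_add, hr, hs]
  | @homogeneous k a =>
    induction x using Decomposition.inductionOn ℳ with
    | zero => simp
    | homogeneous x => exact hf _ _ a a.2 x x.2
    | add x y hx hy => simp only [smul_add, map_add, hx, hy]

theorem coe_decompose_smul_of_mem [Add ι] [IsRightCancelAdd ι] [Semiring R] [SetLike σ R]
    [AddSubmonoidClass σ R] (𝒜 : ι → σ) [Decomposition 𝒜] [AddCommMonoid M] [Module R M]
    [SetLike τ M] [AddSubmonoidClass τ M] (ℳ : ι → τ) [Decomposition ℳ] [SetLike.GradedSMul 𝒜 ℳ]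
    {j : ι} {m : M} (hm : m ∈ ℳ j) (r : R) (i : ι) :
    (decompose ℳ (r • m) (i + j) : M) = (decompose 𝒜 r i : R) • m :=
  coe_decompose_map 𝒜 ℳ (f := LinearMap.toSpanSingleton R M m) (add_left_injective j)
    (fun _ _ hr ↦ SetLike.GradedSMul.smul_mem hr hm) r i

section Submodule

variable [Ring R] [AddCommGroup M] [Module R M] {ℳ : ι → AddSubgroup M} [Decomposition ℳ]
  [AddCommGroup N] [Module R N] {𝒩 : ι → AddSubgroup N} [Decomposition 𝒩] {f : M →ₗ[R] N}

theorem isHomogeneous_map (hf : ∀ i, ∀ x ∈ ℳ i, f x ∈ 𝒩 i) {P : Submodule R M}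
    (hP : P.IsHomogeneous ℳ) : (P.map f).IsHomogeneous 𝒩 := by
  rintro i _ ⟨x, hx, rfl⟩
  exact ⟨_, hP i hx, (coe_decompose_map ℳ 𝒩 Function.injective_id hf x i).symm⟩

theorem isHomogeneous_ker (hf : ∀ i, ∀ x ∈ ℳ i, f x ∈ 𝒩 i) :
    (LinearMap.ker f).IsHomogeneous ℳ := by
  intro i x hx
  have h := coe_decompose_map ℳ 𝒩 Function.injective_id hf x i
  rw [LinearMap.mem_ker.1 hx, decompose_zero] at h
  exact h.symm

end Submodule

theorem eq_iSup_inf_iff_isHomogeneous [AddCommGroup M] (ℳ : ι → AddSubgroup M) [Decomposition ℳ]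
    (P : AddSubgroup M) : P = ⨆ i, P ⊓ ℳ i ↔ SetLike.IsHomogeneous ℳ P := by
  classical
  refine ⟨fun h i x hx ↦ ?_, fun h ↦ le_antisymm (fun x hx ↦ ?_) (iSup_le fun i ↦ inf_le_left)⟩
  · rw [h] at hx
    induction hx using AddSubgroup.iSup_induction' with
    | hp j y hy =>
      obtain rfl | hij := eq_or_ne j i
      · rw [decompose_of_mem_same ℳ hy.2]
        exact hy.1
      · rw [decompose_of_mem_ne ℳ hy.2 hij]
        exact P.zero_mem
    | h1 => simp
    | hadd y z _ _ hy hz => simpa using P.add_mem hy hz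
  · rw [← sum_support_decompose ℳ x]
    exact sum_mem fun i _ ↦ AddSubgroup.mem_iSup_of_mem i ⟨h i hx, (decompose ℳ x i).2⟩

theorem isInternal_of_injective [AddCommGroup M] (ℳ : ι → AddSubgroup M) [Decomposition ℳ]
    [AddCommGroup N] {𝒩 : κ → AddSubgroup N} {f : N →+ M} (hf : Function.Injective f) {s : κ → ι}
    (hs : Function.Injective s) (hmem : ∀ k, ∀ x ∈ 𝒩 k, f x ∈ ℳ (s k))
    (hcomp : ∀ x i, ∃ k, ∃ y ∈ 𝒩 k, f y = decompose ℳ (f x) i) : IsInternal 𝒩 := by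
  classical
  have key (x : ⨁ k, 𝒩 k) (k : κ) :
      (decompose ℳ (f (DirectSum.coeAddMonoidHom 𝒩 x)) (s k) : M) = f (x k) := by
    induction x using DirectSum.induction_on with
    | zero => simp
    | of j y =>
      rw [DirectSum.coeAddMonoidHom_of]
      obtain rfl | hjk := eq_or_ne j k
      · rw [decompose_of_mem_same ℳ (hmem j y y.2), of_eq_same]
      · rw [decompose_of_mem_ne ℳ (hmem j y y.2) (hs.ne hjk), of_eq_of_ne _ _ _ hjk.symm]
        simp
    | add x y hx hy => simp [hx, hy]
  refine ⟨fun x y hxy ↦ DFinsupp.ext fun k ↦ Subtype.ext (hf ?_), fun x ↦ ?_⟩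
  · rw [← key, hxy, key]
  · choose k y hy hfy using hcomp x
    refine ⟨∑ i ∈ (decompose ℳ (f x)).support, of _ (k i) ⟨y i, hy i⟩, hf ?_⟩
    simp only [map_sum, DirectSum.coeAddMonoidHom_of, hfy, sum_support_decompose]

end Decomposition

section GradedModule

variable {G R : Type} [AddCommGroup G] [CommRing R] {𝒜 : G → AddSubgroup R}

theorem IsGradedRing.nonempty_gradedRing [DecidableEq G] (h : IsGradedRing 𝒜) :
    Nonempty (GradedRing 𝒜) := by
  obtain ⟨h1, hmul, hint⟩ := h
  have hint' : IsInternal 𝒜 := by convert hint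
  let := hint'.chooseDecomposition
  exact ⟨{ one_mem := h1, mul_mem := fun _ _ _ _ ↦ hmul }⟩

theorem isGradedRing_of_gradedRing [DecidableEq G] [GradedRing 𝒜] : IsGradedRing 𝒜 := by
  refine ⟨SetLike.GradedOne.one_mem, fun ha hb ↦ SetLike.GradedMul.mul_mem ha hb, ?_⟩
  convert Decomposition.isInternal 𝒜

theorem isGradedIdeal_iff_isHomogeneous [DecidableEq G] [GradedRing 𝒜] {I : Ideal R} :
    IsGradedIdeal 𝒜 I ↔ I.IsHomogeneous 𝒜 :=
  eq_iSup_inf_iff_isHomogeneous 𝒜 I.toAddSubgroup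

variable {M : Type} [AddCommGroup M] [Module R M] {ℳ : G → AddSubgroup M}

theorem IsGradedModule.gradedSMul (h : IsGradedModule 𝒜 ℳ) : SetLike.GradedSMul 𝒜 ℳ :=
  ⟨fun {_ _ _ _} hr hm ↦ h.1 hr hm⟩

theorem IsGradedModule.nonempty_decomposition [DecidableEq G] (h : IsGradedModule 𝒜 ℳ) :
    Nonempty (Decomposition ℳ) := by
  have hint : IsInternal ℳ := by convert h.2
  exact ⟨hint.chooseDecomposition⟩

theorem isGradedModule_of_isInternal [DecidableEq G] [SetLike.GradedSMul 𝒜 ℳ]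
    (h : IsInternal ℳ) : IsGradedModule 𝒜 ℳ := by
  refine ⟨fun hr hm ↦ SetLike.GradedSMul.smul_mem hr hm, ?_⟩
  convert h

theorem IsGradedRing.isGradedModule (h : IsGradedRing 𝒜) : IsGradedModule 𝒜 𝒜 := h.2

end GradedModule

section Shift

variable {G R : Type} [AddCommGroup G] [CommRing R] {𝒜 : G → AddSubgroup R}
  {M : Type} [AddCommGroup M] [Module R M] {ℳ : G → AddSubgroup M}

/-- The grading of the shifted module `M(k)`, whose component of degree `g` is `M_{k + g}`. A graded
morphism `M ⟶ N(k)` is by definition an element of `gradedHomSubgroup ℳ 𝒩 k`. -/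
def shiftGrading (k : G) (ℳ : G → AddSubgroup M) (g : G) : AddSubgroup M := ℳ (k + g)

theorem IsGradedModule.shift (h : IsGradedModule 𝒜 ℳ) (k : G) :
    IsGradedModule 𝒜 (shiftGrading k ℳ) := by
  classical
  obtain ⟨_⟩ := h.nonempty_decomposition
  have : SetLike.GradedSMul 𝒜 (shiftGrading k ℳ) :=
    ⟨fun {i j _ _} hr hm ↦ (add_left_comm i k j ▸ h.1 hr hm : _ ∈ ℳ (k + (i + j)))⟩
  refine isGradedModule_of_isInternal (isInternal_of_injective ℳ (f := .id M)
    Function.injective_id (add_right_injective k) (fun _ _ ↦ id) fun x i ↦ ⟨-k + i, _, ?_, rfl⟩)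
  simp [shiftGrading]

theorem IsInjectiveGradedModule.shift (h : IsInjectiveGradedModule 𝒜 ℳ) (k : G) :
    IsInjectiveGradedModule 𝒜 (shiftGrading k ℳ) := by
  intro A B _ _ _ _ 𝒮A 𝒮B hA hB i hi hig f hf
  obtain ⟨t, ht, hti⟩ := h A B _ _ (hA.shift (-k)) (hB.shift (-k)) i hi (fun g ↦ hig (-k + g)) f
    fun g m hm ↦ add_neg_cancel_left k g ▸ hf _ m hm
  exact ⟨t, fun g m hm ↦ ht (k + g) m ((neg_add_cancel_left k g).symm ▸ hm : m ∈ 𝒮B _), hti⟩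

end Shift

section RestrictGrading

variable {G R M : Type*} [Ring R] [AddCommGroup M] [Module R M] {ℳ : G → AddSubgroup M}

/-- The grading induced by a grading of `M` on a submodule `P`, with components `P ∩ M_g`. -/
def restrictGrading (P : Submodule R M) (ℳ : G → AddSubgroup M) (g : G) : AddSubgroup P :=
  (ℳ g).comap P.subtype.toAddMonoidHom

theorem isInternal_restrictGrading [DecidableEq G] [Decomposition ℳ] {P : Submodule R M}
    (hP : P.IsHomogeneous ℳ) : IsInternal (restrictGrading P ℳ) :=
  isInternal_of_injective ℳ (f := P.subtype.toAddMonoidHom) P.subtype_injective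
    Function.injective_id (fun _ _ ↦ id)
    fun x i ↦ ⟨i, ⟨_, hP i x.2⟩, (decompose ℳ (x : M) i).2, rfl⟩

end RestrictGrading

section GradedSubmodule

variable {G R : Type} [AddCommGroup G] [CommRing R] {𝒜 : G → AddSubgroup R}
  {M : Type} [AddCommGroup M] [Module R M] {ℳ : G → AddSubgroup M}

theorem isGradedModule_restrictGrading [DecidableEq G] [SetLike.GradedSMul 𝒜 ℳ] [Decomposition ℳ]
    {P : Submodule R M} (hP : P.IsHomogeneous ℳ) : IsGradedModule 𝒜 (restrictGrading P ℳ) :=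
  have : SetLike.GradedSMul 𝒜 (restrictGrading P ℳ) :=
    ⟨fun {_ _ _ _} hr hm ↦ SetLike.GradedSMul.smul_mem (B := ℳ) hr hm⟩
  isGradedModule_of_isInternal (isInternal_restrictGrading hP)

end GradedSubmodule

section Noetherian

variable {G R : Type} [AddCommGroup G] [DecidableEq G] [CommRing R] {𝒜 : G → AddSubgroup R}
  [GradedRing 𝒜]

variable (𝒜) in
theorem gradedIdeal_chain_condition_iff_wellFoundedGT :
    (∀ I : ℕ → Ideal R, (∀ n, IsGradedIdeal 𝒜 (I n)) → Monotone I → ∃ n, ∀ m, n ≤ m → I m = I n) ↔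
      WellFoundedGT (HomogeneousIdeal 𝒜) := by
  simp_rw [wellFoundedGT_iff_monotone_chain_condition, isGradedIdeal_iff_isHomogeneous]
  refine ⟨fun h I ↦ ?_, fun h I hI hmono ↦ ?_⟩
  · obtain ⟨n, hn⟩ := h (fun m ↦ (I m).toIdeal) (fun m ↦ (I m).isHomogeneous) I.monotone
    exact ⟨n, fun m hm ↦ HomogeneousIdeal.toIdeal_injective (hn m hm).symm⟩
  · obtain ⟨n, hn⟩ := h ⟨fun m ↦ ⟨I m, hI m⟩, hmono⟩
    exact ⟨n, fun m hm ↦ congrArg HomogeneousIdeal.toIdeal (hn m hm).symm⟩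

theorem isSmall_restrictGrading {M : Type} [AddCommGroup M] [Module R M] {ℳ : G → AddSubgroup M}
    [SetLike.GradedSMul 𝒜 ℳ] [Decomposition ℳ] [WellFoundedGT (HomogeneousSubmodule 𝒜 ℳ)]
    {P : Submodule R M} (hP : P.IsHomogeneous ℳ) : IsSmall 𝒜 (restrictGrading P ℳ) := by
  classical
  intro ι N _ _ 𝒩 h𝒩 f hf
  let := (isInternal_restrictGrading hP).chooseDecomposition
  let K (s : Finset ι) : Submodule R M :=
    (⨅ i ∉ s, LinearMap.ker (DirectSum.component R ι N i ∘ₗ f)).map P.subtype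
  have mem_K (s : Finset ι) (x : P) : (x : M) ∈ K s ↔ ∀ i ∉ s, f x i = 0 := by
    simp only [K, Submodule.mem_map, Submodule.subtype_apply, SetLike.coe_eq_coe, exists_eq_right,
      Submodule.mem_iInf]
    exact Iff.rfl
  have hK (s : Finset ι) : (K s).IsHomogeneous ℳ := by
    refine isHomogeneous_map (ℳ := restrictGrading P ℳ) (fun _ _ ↦ id) fun g x hx ↦ ?_
    simp only [Submodule.mem_iInf] at hx ⊢
    intro i hi
    obtain ⟨_⟩ := (h𝒩 i).nonempty_decomposition
    exact isHomogeneous_ker (𝒩 := 𝒩 i) (fun g x hx ↦ hf g x hx i) g (hx i hi)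
  obtain ⟨_, ⟨s, rfl⟩, hs⟩ := (wellFounded_gt (α := HomogeneousSubmodule 𝒜 ℳ)).has_min
    (Set.range fun s ↦ ⟨K s, hK s⟩) (Set.range_nonempty _)
  refine ⟨s, fun x ↦ (mem_K s x).1 ?_⟩
  let t := s ∪ DFinsupp.support (f x)
  have hst : K s ≤ K t := Submodule.map_mono <| biInf_mono fun i ↦ mt (Finset.mem_union_left _)
  have hts : K t ≤ K s := not_lt_iff_le_imp_ge.1 (hs _ ⟨t, rfl⟩) hst
  exact hts <| (mem_K t x).2 fun i hi ↦
    DFinsupp.notMem_support_iff.1 fun hix ↦ hi (Finset.mem_union_right s hix)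

end Noetherian

section PartialMap

variable {G R B E : Type*} [DecidableEq G] [Ring R] [AddCommGroup B] [Module R B] [AddCommGroup E]
  [Module R E] (ℬ : G → AddSubgroup B) [Decomposition ℬ] (ℰ : G → AddSubgroup E)

/-- A partially defined linear map `B →ₗ.[R] E` is graded if its domain is a graded submodule and it
respects the degrees of the homogeneous elements of its domain. -/
structure IsGradedPMap (u : B →ₗ.[R] E) : Prop where
  isHomogeneous_domain : u.domain.IsHomogeneous ℬ
  map_mem : ∀ g (x : u.domain), (x : B) ∈ ℬ g → u x ∈ ℰ g

variable {ℬ ℰ}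

theorem isGradedPMap_sSup {c : Set (B →ₗ.[R] E)} (hc : ∀ u ∈ c, IsGradedPMap ℬ ℰ u)
    (hne : c.Nonempty) (hdir : DirectedOn (· ≤ ·) c) :
    IsGradedPMap ℬ ℰ (LinearPMap.sSup c hdir) where
  isHomogeneous_domain g x hx := by
    rw [LinearPMap.mem_domain_sSup_iff hne] at hx ⊢
    obtain ⟨u, hu, hx⟩ := hx
    exact ⟨u, hu, (hc u hu).isHomogeneous_domain g hx⟩
  map_mem g x hxg := by
    obtain ⟨u, hu, hx⟩ := (LinearPMap.mem_domain_sSup_iff hne hdir).1 x.2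
    rw [LinearPMap.sSup_apply hdir hu ⟨x, hx⟩]
    exact (hc u hu).map_mem g _ hxg

theorem IsGradedPMap.sup {u w : B →ₗ.[R] E} (hu : IsGradedPMap ℬ ℰ u) (hw : IsGradedPMap ℬ ℰ w)
    (h : ∀ (x : u.domain) (y : w.domain), (x : B) = y → u x = w y) :
    IsGradedPMap ℬ ℰ (u.sup w h) where
  isHomogeneous_domain g x hx := by
    obtain ⟨y, hy, z, hz, rfl⟩ := Submodule.mem_sup.1 hx
    rw [decompose_add, DirectSum.add_apply, AddMemClass.coe_add]
    exact Submodule.add_mem_sup (hu.isHomogeneous_domain g hy) (hw.isHomogeneous_domain g hz)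
  map_mem g := by
    rintro ⟨x, hx⟩ hxg
    obtain ⟨y, hy, z, hz, rfl⟩ := Submodule.mem_sup.1 hx
    have hyz := decompose_of_mem_same ℬ hxg
    rw [decompose_add, DirectSum.add_apply, AddMemClass.coe_add] at hyz
    rw [LinearPMap.sup_apply h ⟨_, hu.isHomogeneous_domain g hy⟩
      ⟨_, hw.isHomogeneous_domain g hz⟩ _ hyz]
    exact add_mem (hu.map_mem g _ (decompose ℬ y g).2) (hw.map_mem g _ (decompose ℬ z g).2)

theorem isGradedPMap_mkSpanSingleton' [AddGroup G] (𝒜 : G → AddSubgroup R) [Decomposition 𝒜]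
    [SetLike.GradedSMul 𝒜 ℬ] [SetLike.GradedSMul 𝒜 ℰ] {k : G} {b : B} (hb : b ∈ ℬ k) {v : E}
    (hv : v ∈ ℰ k) (hbv : ∀ r : R, r • b = 0 → r • v = 0) :
    IsGradedPMap ℬ ℰ (LinearPMap.mkSpanSingleton' b v hbv) := by
  have hdec (r : R) (g : G) : (decompose ℬ (r • b) g : B) = (decompose 𝒜 r (g - k) : R) • b := by
    rw [← coe_decompose_smul_of_mem 𝒜 ℬ hb, sub_add_cancel]
  constructor
  · intro g x hx
    obtain ⟨r, rfl⟩ := Submodule.mem_span_singleton.1 hx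
    rw [hdec]
    exact Submodule.mem_span_singleton.2 ⟨_, rfl⟩
  · rintro g ⟨x, hx⟩ hxg
    obtain ⟨r, rfl⟩ := Submodule.mem_span_singleton.1 hx
    have hr : r • b = (decompose 𝒜 r (g - k) : R) • b :=
      (decompose_of_mem_same ℬ hxg).symm.trans (hdec r g)
    simp_rw [hr, LinearPMap.mkSpanSingleton'_apply]
    have hmem := SetLike.GradedSMul.smul_mem (decompose 𝒜 r (g - k)).2 hv
    rwa [vadd_eq_add, sub_add_cancel] at hmem

theorem exists_isGradedPMap_of_injective {A : Type*} [AddCommGroup A] [Module R A]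
    {𝒮 : G → AddSubgroup A} [Decomposition 𝒮] {i : A →ₗ[R] B} (hi : Function.Injective i)
    (hig : ∀ g, ∀ x ∈ 𝒮 g, i x ∈ ℬ g) {f : A →ₗ[R] E} (hf : ∀ g, ∀ x ∈ 𝒮 g, f x ∈ ℰ g) :
    ∃ u : B →ₗ.[R] E, IsGradedPMap ℬ ℰ u ∧ ∀ a, ∃ h : i a ∈ u.domain, u ⟨i a, h⟩ = f a := by
  let e := LinearEquiv.ofInjective i hi
  have hdec (a : A) (g : G) : (decompose ℬ (i a) g : B) = i (decompose 𝒮 a g) :=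
    coe_decompose_map 𝒮 ℬ Function.injective_id hig a g
  refine ⟨⟨LinearMap.range i, f ∘ₗ e.symm⟩, ⟨?_, ?_⟩, fun a ↦ ⟨⟨a, rfl⟩, ?_⟩⟩
  · rintro g _ ⟨a, rfl⟩
    exact ⟨_, (hdec a g).symm⟩
  · rintro g ⟨_, a, rfl⟩ ha
    have : a ∈ 𝒮 g := by
      rw [← hi ((hdec a g).symm.trans (decompose_of_mem_same ℬ ha))]
      exact (decompose 𝒮 a g).2
    exact (congrArg f (e.symm_apply_apply a) ▸ hf g a this :)
  · exact congrArg f (e.symm_apply_apply a)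

end PartialMap

section Baer

variable {G R : Type} [AddCommGroup G] [CommRing R]

/-- Baer's condition for graded modules: every graded morphism from a graded ideal `I` to a shift
`E(g)` is multiplication by an element of `E_g`. -/
def IsGradedBaer (𝒜 : G → AddSubgroup R) {E : Type} [AddCommGroup E] [Module R E]
    (ℰ : G → AddSubgroup E) : Prop :=
  ∀ I : Ideal R, IsGradedIdeal 𝒜 I → ∀ g,
    ∀ φ : I →ₗ[R] E, φ ∈ gradedHomSubgroup (restrictGrading I 𝒜) ℰ g →
      ∃ e ∈ ℰ g, ∀ r : I, φ r = (r : R) • e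

variable {𝒜 : G → AddSubgroup R} {E : Type} [AddCommGroup E] [Module R E] {ℰ : G → AddSubgroup E}

theorem IsInjectiveGradedModule.isGradedBaer (h𝒜 : IsGradedRing 𝒜)
    (h : IsInjectiveGradedModule 𝒜 ℰ) : IsGradedBaer 𝒜 ℰ := by
  classical
  obtain ⟨_⟩ := h𝒜.nonempty_gradedRing
  intro I hI g φ hφ
  have hI' := isGradedModule_restrictGrading
    (𝒜 := 𝒜) (ℳ := 𝒜) (isGradedIdeal_iff_isHomogeneous.1 hI)
  obtain ⟨t, ht, htφ⟩ := h.shift g I R _ 𝒜 hI' h𝒜.isGradedModule I.subtype I.subtype_injective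
    (fun _ _ ↦ id) φ hφ
  refine ⟨t 1, add_zero g ▸ ht 0 1 h𝒜.1, fun r ↦ ?_⟩
  rw [← htφ, ← map_smul, smul_eq_mul, mul_one, LinearMap.comp_apply, Submodule.subtype_apply]

section Extension

variable [DecidableEq G] {B : Type} [AddCommGroup B] [Module R B] {ℬ : G → AddSubgroup B}
  [Decomposition ℬ]

theorem IsGradedBaer.exists_eq_smul [GradedRing 𝒜] [SetLike.GradedSMul 𝒜 ℬ]
    (h : IsGradedBaer 𝒜 ℰ) {u : B →ₗ.[R] E} (hu : IsGradedPMap ℬ ℰ u) {k : G} {b : B}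
    (hb : b ∈ ℬ k) : ∃ v ∈ ℰ k, ∀ (r : R) (hr : r • b ∈ u.domain), u ⟨r • b, hr⟩ = r • v := by
  let I : Ideal R := u.domain.comap (LinearMap.toSpanSingleton R B b)
  have hI : I.IsHomogeneous 𝒜 := by
    intro g r hr
    change (decompose 𝒜 r g : R) • b ∈ u.domain
    rw [← coe_decompose_smul_of_mem 𝒜 ℬ hb]
    exact hu.isHomogeneous_domain _ hr
  let φ : I →ₗ[R] E := u.toFun ∘ₗ (LinearMap.toSpanSingleton R B b).restrict fun _ hr ↦ hr
  have hφ : φ ∈ gradedHomSubgroup (restrictGrading I 𝒜) ℰ k := fun g r hr ↦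
    hu.map_mem _ _ (add_comm g k ▸ SetLike.GradedSMul.smul_mem (A := 𝒜) hr hb)
  obtain ⟨v, hv, hφv⟩ := h I (isGradedIdeal_iff_isHomogeneous.2 hI) k φ hφ
  exact ⟨v, hv, fun r hr ↦ hφv ⟨r, hr⟩⟩

theorem IsGradedBaer.domain_eq_top_of_maximal [GradedRing 𝒜] [SetLike.GradedSMul 𝒜 ℬ]
    [SetLike.GradedSMul 𝒜 ℰ] (h : IsGradedBaer 𝒜 ℰ) {u : B →ₗ.[R] E}
    (hu : Maximal (IsGradedPMap ℬ ℰ) u) : u.domain = ⊤ := by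
  have mem_domain (k : G) (b : B) (hb : b ∈ ℬ k) : b ∈ u.domain := by
    obtain ⟨v, hv, huv⟩ := h.exists_eq_smul hu.prop hb
    have hbv (r : R) (hr : r • b = 0) : r • v = 0 := by
      rw [← huv r (hr ▸ u.domain.zero_mem)]
      simp_rw [hr]
      exact u.map_zero
    let w : B →ₗ.[R] E := LinearPMap.mkSpanSingleton' b v hbv
    have huw (x : u.domain) (y : w.domain) (hxy : (x : B) = y) : u x = w y := by
      obtain ⟨⟨x, hx⟩, y, hy⟩ := x, y
      obtain ⟨r, rfl⟩ := Submodule.mem_span_singleton.1 hy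
      obtain rfl : x = r • b := hxy
      rw [huv, LinearPMap.mkSpanSingleton'_apply, RingHom.id_apply]
    have hsup := hu.prop.sup (isGradedPMap_mkSpanSingleton' 𝒜 hb hv hbv) huw
    exact (hu.le_of_ge hsup (LinearPMap.left_le_sup u w huw)).1
      (Submodule.mem_sup_right (Submodule.mem_span_singleton_self b))
  classical
  refine eq_top_iff.2 fun x _ ↦ ?_
  rw [← sum_support_decompose ℬ x]
  exact sum_mem fun k _ ↦ mem_domain k _ (decompose ℬ x k).2

end Extension

theorem IsGradedBaer.isInjectiveGradedModule [SetLike.GradedSMul 𝒜 ℰ] (h𝒜 : IsGradedRing 𝒜)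
    (h : IsGradedBaer 𝒜 ℰ) : IsInjectiveGradedModule 𝒜 ℰ := by
  classical
  intro A B _ _ _ _ 𝒮A 𝒮B hA hB i hi hig f hf
  obtain ⟨_⟩ := h𝒜.nonempty_gradedRing
  obtain ⟨_⟩ := hA.nonempty_decomposition
  obtain ⟨_⟩ := hB.nonempty_decomposition
  have := hB.gradedSMul
  obtain ⟨u₀, hu₀, hu₀f⟩ := exists_isGradedPMap_of_injective hi hig hf
  obtain ⟨u, hle, hu⟩ := zorn_le_nonempty₀ {u | IsGradedPMap 𝒮B ℰ u}
    (fun c hc hchain y hy ↦ ⟨LinearPMap.sSup c hchain.directedOn,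
      isGradedPMap_sSup hc ⟨y, hy⟩ _, fun _ ↦ LinearPMap.le_sSup _⟩) u₀ hu₀
  have htop : u.domain = ⊤ := h.domain_eq_top_of_maximal hu
  refine ⟨u.toFun ∘ₗ (LinearEquiv.ofTop _ htop).symm, fun g m hm ↦ hu.prop.map_mem g _ hm, ?_⟩
  ext a
  obtain ⟨ha, hfa⟩ := hu₀f a
  rw [← hfa]
  exact (hle.2 rfl).symm

end Baer

section DirectSum

variable {ι : Type*} [DecidableEq ι] (β : ι → Type*) [∀ i, AddCommGroup (β i)]

/-- The decomposition of a direct sum into the images of its summands. -/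
abbrev decompositionRangeOf : Decomposition fun i ↦ (DirectSum.of β i).range :=
  .ofAddHom _ (DirectSum.map fun i ↦ (DirectSum.of β i).rangeRestrict)
    (DirectSum.addHom_ext fun i x ↦ by
      rw [AddMonoidHom.comp_apply, DirectSum.map_of, DirectSum.coeAddMonoidHom_of]
      rfl)
    (DirectSum.addHom_ext <| by
      rintro i ⟨_, x, rfl⟩
      rw [AddMonoidHom.comp_apply, DirectSum.coeAddMonoidHom_of]
      exact DirectSum.map_of (fun i ↦ (DirectSum.of β i).rangeRestrict) i x)

end DirectSum

section Cofree

variable {ι R : Type*} [DecidableEq ι] [Ring R]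

/-- The cofree graded module on an `R`-module `Q`, that is `⨁_g Q` with `a ∈ R_h` mapping the
`g`-th copy of `Q` to the `(h + g)`-th one. It is right adjoint to forgetting the grading. The
phantom argument `𝒜` determines the `R`-module structure. -/
def Cofree (_𝒜 : ι → AddSubgroup R) (Q : Type*) [AddCommGroup Q] : Type _ := ⨁ _ : ι, Q

namespace Cofree

variable (𝒜 : ι → AddSubgroup R) (Q : Type*) [AddCommGroup Q]

instance : AddCommGroup (Cofree 𝒜 Q) := inferInstanceAs (AddCommGroup (⨁ _ : ι, Q))

/-- The inclusion of `Q` as the homogeneous component of degree `g`. -/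
def of (g : ι) : Q →+ Cofree 𝒜 Q := DirectSum.of (fun _ ↦ Q) g

/-- The grading of `Cofree 𝒜 Q` by the copies of `Q`. -/
def grading (g : ι) : AddSubgroup (Cofree 𝒜 Q) := (of 𝒜 Q g).range

/-- The additive map underlying `Cofree.counit`, summing the components. -/
def sumAddHom : Cofree 𝒜 Q →+ Q := DirectSum.toAddMonoid fun _ ↦ .id Q

theorem sumAddHom_of (g : ι) (q : Q) : sumAddHom 𝒜 Q (of 𝒜 Q g q) = q :=
  DirectSum.toAddMonoid_of (fun _ ↦ .id Q) g q

variable {Q} in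
/-- The additive map underlying `Cofree.lift`, with components `x ↦ u (x_g)`. -/
def liftAddHom {M : Type*} [AddCommGroup M] (ℳ : ι → AddSubgroup M) [Decomposition ℳ] (u : M →+ Q) :
    M →+ Cofree 𝒜 Q :=
  (DirectSum.map fun g ↦ u.comp (ℳ g).subtype).comp (decomposeAddEquiv ℳ).toAddMonoidHom

variable {Q} in
theorem liftAddHom_of_mem {M : Type*} [AddCommGroup M] {ℳ : ι → AddSubgroup M} [Decomposition ℳ]
    (u : M →+ Q) {g : ι} {x : M} (hx : x ∈ ℳ g) : liftAddHom 𝒜 ℳ u x = of 𝒜 Q g (u x) := by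
  change DirectSum.map _ (decompose ℳ x) = _
  rw [decompose_of_mem ℳ hx, DirectSum.map_of]
  rfl

instance : Decomposition (grading 𝒜 Q) := decompositionRangeOf fun _ : ι ↦ Q

variable [AddMonoid ι] [GradedRing 𝒜] [Module R Q]

instance : Gmodule (fun g ↦ 𝒜 g) (fun _ : ι ↦ Q) where
  smul a q := (a : R) • q
  one_smul _ := Sigma.ext (zero_vadd _ _) (heq_of_eq (one_smul R _))
  mul_smul _ _ _ := Sigma.ext (add_vadd _ _ _) (heq_of_eq (mul_smul (_ : R) _ _))
  smul_add a := smul_add (a : R)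
  smul_zero a := smul_zero (a : R)
  add_smul a b := add_smul (a : R) (b : R)
  zero_smul := zero_smul R

noncomputable instance : Module R (Cofree 𝒜 Q) :=
  Module.compHom (⨁ _ : ι, Q) (decomposeRingEquiv 𝒜).toRingHom

variable {𝒜 Q}

theorem smul_of {h : ι} {a : R} (ha : a ∈ 𝒜 h) (g : ι) (q : Q) :
    a • of 𝒜 Q g q = of 𝒜 Q (h + g) (a • q) := by
  change decompose 𝒜 a • DirectSum.of (fun _ ↦ Q) g q = _
  rw [decompose_of_mem 𝒜 ha, Gmodule.of_smul_of]
  rfl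

instance : SetLike.GradedSMul 𝒜 (grading 𝒜 Q) where
  smul_mem := by
    rintro h g a _ ha ⟨q, rfl⟩
    exact ⟨a • q, (smul_of ha g q).symm⟩

variable (𝒜 Q) in
/-- The counit of the adjunction between forgetting the grading and `Cofree`. -/
def counit : Cofree 𝒜 Q →ₗ[R] Q where
  __ := sumAddHom 𝒜 Q
  map_smul' := by
    refine map_smul_of_homogeneous 𝒜 (grading 𝒜 Q) (f := sumAddHom 𝒜 Q) ?_
    rintro h g a ha _ ⟨q, rfl⟩
    rw [smul_of ha, sumAddHom_of, sumAddHom_of]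

@[simp]
theorem counit_of (g : ι) (q : Q) : counit 𝒜 Q (of 𝒜 Q g q) = q :=
  sumAddHom_of 𝒜 Q g q

theorem eq_of_counit_eq {g : ι} {x y : Cofree 𝒜 Q} (hx : x ∈ grading 𝒜 Q g)
    (hy : y ∈ grading 𝒜 Q g) (h : counit 𝒜 Q x = counit 𝒜 Q y) : x = y := by
  obtain ⟨⟨q, rfl⟩, q', rfl⟩ := hx, hy
  rw [counit_of, counit_of] at h
  rw [h]

variable {M : Type*} [AddCommGroup M] [Module R M] {ℳ : ι → AddSubgroup M} [Decomposition ℳ]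
  [SetLike.GradedSMul 𝒜 ℳ]

variable (𝒜 ℳ) in
/-- The graded morphism `M ⟶ Cofree 𝒜 Q` corresponding to a linear map `M → Q` under the
adjunction. -/
def lift (u : M →ₗ[R] Q) : M →ₗ[R] Cofree 𝒜 Q where
  __ := liftAddHom 𝒜 ℳ u.toAddMonoidHom
  map_smul' := map_smul_of_homogeneous 𝒜 ℳ fun h g a ha x hx ↦ by
    rw [liftAddHom_of_mem 𝒜 _ hx, liftAddHom_of_mem 𝒜 _ (SetLike.GradedSMul.smul_mem ha hx),
      smul_of ha]
    simp

theorem lift_of_mem (u : M →ₗ[R] Q) {g : ι} {x : M} (hx : x ∈ ℳ g) :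
    lift 𝒜 ℳ u x = of 𝒜 Q g (u x) :=
  liftAddHom_of_mem 𝒜 u.toAddMonoidHom hx

theorem lift_mem_grading (u : M →ₗ[R] Q) {g : ι} {x : M} (hx : x ∈ ℳ g) :
    lift 𝒜 ℳ u x ∈ grading 𝒜 Q g :=
  ⟨u x, (lift_of_mem u hx).symm⟩

theorem lift_eq_zero_iff (u : M →ₗ[R] Q) (x : M) :
    lift 𝒜 ℳ u x = 0 ↔ ∀ g, u (decompose ℳ x g) = 0 :=
  DFinsupp.ext_iff

theorem ker_lift {u : M →ₗ[R] Q} (hu : (LinearMap.ker u).IsHomogeneous ℳ) :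
    LinearMap.ker (lift 𝒜 ℳ u) = LinearMap.ker u := by
  ext x
  rw [LinearMap.mem_ker, lift_eq_zero_iff]
  exact (AddSubmonoidClass.IsHomogeneous.mem_iff ℳ _ hu).symm

end Cofree

end Cofree

section Injective

universe u v

theorem exists_injective_linearMap_to_injective {R : Type u} [Ring R] [Small.{v} R]
    (M : Type v) [AddCommGroup M] [Module R M] :
    ∃ (Q : Type v) (_ : AddCommGroup Q) (_ : Module R Q) (u : M →ₗ[R] Q),
      Module.Injective R Q ∧ Function.Injective u := by
  let J := CategoryTheory.Injective.under (ModuleCat.of.{v} R M)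
  have : CategoryTheory.Injective (ModuleCat.of.{v} R J) :=
    inferInstanceAs (CategoryTheory.Injective J)
  exact ⟨J, inferInstance, inferInstance, (CategoryTheory.Injective.ι (ModuleCat.of.{v} R M)).hom,
    Module.injective_module_of_injective_object R J,
    (ModuleCat.mono_iff_injective _).1 inferInstance⟩

end Injective

section EnoughInjectives

variable {G R : Type} [AddCommGroup G] [CommRing R] {𝒜 : G → AddSubgroup R}

theorem Cofree.isGradedModule [DecidableEq G] [GradedRing 𝒜] (Q : Type) [AddCommGroup Q]
    [Module R Q] : IsGradedModule 𝒜 (grading 𝒜 Q) :=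
  isGradedModule_of_isInternal (Decomposition.isInternal (grading 𝒜 Q))

theorem Cofree.isInjectiveGradedModule [DecidableEq G] [GradedRing 𝒜] (Q : Type) [AddCommGroup Q]
    [Module R Q] [Module.Injective R Q] : IsInjectiveGradedModule 𝒜 (grading 𝒜 Q) := by
  intro A B _ _ _ _ 𝒮A 𝒮B hA hB i hi hig f hf
  obtain ⟨_⟩ := hA.nonempty_decomposition
  obtain ⟨_⟩ := hB.nonempty_decomposition
  have := hB.gradedSMul
  obtain ⟨v, hv⟩ := Module.Injective.out i hi (counit 𝒜 Q ∘ₗ f)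
  refine ⟨lift 𝒜 𝒮B v, fun g x hx ↦ lift_mem_grading v hx, LinearMap.toAddMonoidHom_injective <|
    addMonoidHom_ext_of_homogeneous 𝒮A fun g x hx ↦
      eq_of_counit_eq (lift_mem_grading v (hig g x hx)) (hf g x hx) ?_⟩
  change counit 𝒜 Q (lift 𝒜 𝒮B v (i x)) = counit 𝒜 Q (f x)
  rw [lift_of_mem v (hig g x hx), counit_of, hv, LinearMap.comp_apply]

theorem exists_isGradedHom_ker_eq_of_isHomogeneous [DecidableEq G] [GradedRing 𝒜] {M : Type}
    [AddCommGroup M] [Module R M] {ℳ : G → AddSubgroup M} [Decomposition ℳ]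
    [SetLike.GradedSMul 𝒜 ℳ] {P : Submodule R M} (hP : P.IsHomogeneous ℳ) :
    ∃ (F : Type) (_ : AddCommGroup F) (_ : Module R F) (ℱ : G → AddSubgroup F) (w : M →ₗ[R] F),
      IsGradedModule 𝒜 ℱ ∧ IsInjectiveGradedModule 𝒜 ℱ ∧ IsGradedHom ℳ ℱ w ∧
        LinearMap.ker w = P := by
  obtain ⟨Q, _, _, u, _, hu⟩ := exists_injective_linearMap_to_injective (R := R) (M ⧸ P)
  have hker : LinearMap.ker (u ∘ₗ P.mkQ) = P := by
    rw [LinearMap.ker_comp_of_ker_eq_bot _ (LinearMap.ker_eq_bot.2 hu), P.ker_mkQ]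
  exact ⟨Cofree 𝒜 Q, inferInstance, inferInstance, Cofree.grading 𝒜 Q,
    Cofree.lift 𝒜 ℳ (u ∘ₗ P.mkQ), Cofree.isGradedModule Q, Cofree.isInjectiveGradedModule Q,
    fun _ _ ↦ Cofree.lift_mem_grading _, (Cofree.ker_lift (hker.symm ▸ hP)).trans hker⟩

end EnoughInjectives

section DirectSumInjective

variable {G R : Type} [AddCommGroup G] [CommRing R] {𝒜 : G → AddSubgroup R} {ι : Type}
  {N : ι → Type} [∀ i, AddCommGroup (N i)] [∀ i, Module R (N i)] {𝒩 : ∀ i, G → AddSubgroup (N i)}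

theorem gradedSMul_directSumGrading [∀ i, SetLike.GradedSMul 𝒜 (𝒩 i)] :
    SetLike.GradedSMul 𝒜 (directSumGrading 𝒩) :=
  ⟨fun {_ _ _ _} hr hx i ↦ SetLike.GradedSMul.smul_mem hr (hx i)⟩

theorem isGradedBaer_directSumGrading [DecidableEq G] [GradedRing 𝒜]
    [WellFoundedGT (HomogeneousIdeal 𝒜)] (h𝒩 : ∀ i, IsGradedModule 𝒜 (𝒩 i))
    (hBaer : ∀ i, IsGradedBaer 𝒜 (𝒩 i)) : IsGradedBaer 𝒜 (directSumGrading 𝒩) := by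
  classical
  intro I hI g φ hφ
  obtain ⟨s, hs⟩ := isSmall_restrictGrading (𝒜 := 𝒜) (ℳ := 𝒜)
    (isGradedIdeal_iff_isHomogeneous.1 hI) ι N _ (fun i ↦ (h𝒩 i).shift g) φ hφ
  choose e he heφ using fun i ↦ hBaer i I hI g (DirectSum.component R ι N i ∘ₗ φ)
    fun h r hr ↦ hφ h r hr i
  refine ⟨DirectSum.mk N s fun i ↦ e i, fun i ↦ ?_, fun r ↦ DFinsupp.ext fun i ↦ ?_⟩
  · by_cases hi : i ∈ s
    · rw [DirectSum.mk_apply_of_mem hi]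
      exact he i
    · rw [DirectSum.mk_apply_of_notMem hi]
      exact zero_mem _
  · rw [DirectSum.smul_apply]
    by_cases hi : i ∈ s
    · rw [DirectSum.mk_apply_of_mem hi]
      exact heφ i r
    · rw [DirectSum.mk_apply_of_notMem hi, smul_zero, hs r i hi]

theorem isInjectiveGradedModule_directSumGrading [DecidableEq G] [GradedRing 𝒜]
    [WellFoundedGT (HomogeneousIdeal 𝒜)] (h𝒩 : ∀ i, IsGradedModule 𝒜 (𝒩 i))
    (hinj : ∀ i, IsInjectiveGradedModule 𝒜 (𝒩 i)) :
    IsInjectiveGradedModule 𝒜 (directSumGrading 𝒩) := by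
  have (i : ι) := (h𝒩 i).gradedSMul
  have := gradedSMul_directSumGrading (𝒜 := 𝒜) (𝒩 := 𝒩)
  have h𝒜 : IsGradedRing 𝒜 := isGradedRing_of_gradedRing
  have hBaer (i : ι) : IsGradedBaer 𝒜 (𝒩 i) := (hinj i).isGradedBaer h𝒜
  exact (isGradedBaer_directSumGrading h𝒩 hBaer).isInjectiveGradedModule h𝒜

end DirectSumInjective

section Converse

theorem exists_linearMap_directSum_apply_eq {ι R M : Type*} [Semiring R] [AddCommMonoid M]
    [Module R M] {N : ι → Type*} [∀ i, AddCommMonoid (N i)] [∀ i, Module R (N i)]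
    (f : ∀ i, M →ₗ[R] N i) (hf : ∀ x, {i | f i x ≠ 0}.Finite) :
    ∃ F : M →ₗ[R] ⨁ i, N i, ∀ x i, F x i = f i x := by
  classical
  let F (x : M) : ⨁ i, N i := DirectSum.mk N (hf x).toFinset fun i ↦ f i x
  have hF (x : M) (i : ι) : F x i = f i x := by
    by_cases hi : i ∈ (hf x).toFinset
    · exact DirectSum.mk_apply_of_mem hi
    · rw [DirectSum.mk_apply_of_notMem hi]
      exact (not_not.1 (mt (hf x).mem_toFinset.2 hi)).symm
  refine ⟨⟨⟨F, fun x y ↦ DFinsupp.ext fun i ↦ ?_⟩, fun r x ↦ DFinsupp.ext fun i ↦ ?_⟩, hF⟩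
  · rw [DirectSum.add_apply, hF, hF, hF, map_add]
  · rw [RingHom.id_apply, DirectSum.smul_apply, hF, hF, map_smul]

variable {G R : Type} [AddCommGroup G] [DecidableEq G] [CommRing R] {𝒜 : G → AddSubgroup R}
  [GradedRing 𝒜]

theorem exists_iSup_ker_le_ker_of_isInjective_directSumGrading {F : ℕ → Type}
    [∀ n, AddCommGroup (F n)] [∀ n, Module R (F n)] {ℱ : ∀ n, G → AddSubgroup (F n)}
    (hℱ : ∀ n, IsGradedModule 𝒜 (ℱ n)) (hinj : IsInjectiveGradedModule 𝒜 (directSumGrading ℱ))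
    {w : ∀ n, R →ₗ[R] F n} (hw : ∀ n, IsGradedHom 𝒜 (ℱ n) (w n))
    (hmono : Monotone fun n ↦ LinearMap.ker (w n)) :
    ∃ n, ⨆ m, LinearMap.ker (w m) ≤ LinearMap.ker (w n) := by
  classical
  let J : Ideal R := ⨆ m, LinearMap.ker (w m)
  have hJ : J.IsHomogeneous 𝒜 := Ideal.IsHomogeneous.iSup fun n ↦ by
    obtain ⟨_⟩ := (hℱ n).nonempty_decomposition
    exact isHomogeneous_ker (hw n)
  have hfin (x : J) : {n | (w n ∘ₗ J.subtype) x ≠ 0}.Finite := by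
    obtain ⟨n, hn⟩ := (Submodule.mem_iSup_of_directed _ hmono.directed_le).1 x.2
    exact (Set.finite_lt_nat n).subset fun m hm ↦ not_le.1 fun hnm ↦ hm (hmono hnm hn)
  obtain ⟨f, hf⟩ := exists_linearMap_directSum_apply_eq (fun n ↦ w n ∘ₗ J.subtype) hfin
  obtain ⟨t, -, ht⟩ := hinj J R _ 𝒜 (isGradedModule_restrictGrading (ℳ := 𝒜) hJ)
    isGradedRing_of_gradedRing.isGradedModule J.subtype J.subtype_injective (fun _ _ ↦ id) f
    fun g x hx n ↦ hf x n ▸ hw n g _ hx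
  obtain ⟨n, hn⟩ := Infinite.exists_notMem_finset (DFinsupp.support (t 1))
  refine ⟨n, fun x hx ↦ ?_⟩
  calc w n x = f ⟨x, hx⟩ n := (hf ⟨x, hx⟩ n).symm
    _ = t x n := by rw [← ht]; rfl
    _ = (x • t 1) n := by rw [← map_smul, smul_eq_mul, mul_one]
    _ = 0 := by rw [DirectSum.smul_apply, DFinsupp.notMem_support_iff.1 hn, smul_zero]

theorem wellFoundedGT_homogeneousIdeal_of_isInjective_directSumGrading
    (h : ∀ (N : ℕ → Type) [∀ i, AddCommGroup (N i)] [∀ i, Module R (N i)],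
      ∀ 𝒩 : ∀ i, G → AddSubgroup (N i), (∀ i, IsGradedModule 𝒜 (𝒩 i)) →
        (∀ i, IsInjectiveGradedModule 𝒜 (𝒩 i)) →
          IsInjectiveGradedModule 𝒜 (directSumGrading 𝒩)) :
    WellFoundedGT (HomogeneousIdeal 𝒜) := by
  refine wellFoundedGT_iff_monotone_chain_condition.2 fun I ↦ ?_
  choose F _ _ ℱ w hℱ hinj hw hker using fun n ↦
    exists_isGradedHom_ker_eq_of_isHomogeneous (𝒜 := 𝒜) (ℳ := 𝒜) (I n).isHomogeneous
  obtain ⟨n, hn⟩ := exists_iSup_ker_le_ker_of_isInjective_directSumGrading hℱ (h F ℱ hℱ hinj) hw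
    (by simp only [hker]; exact fun _ _ hmn ↦ I.monotone hmn)
  simp only [hker] at hn
  exact ⟨n, fun m hm ↦ le_antisymm (I.monotone hm) ((le_iSup (fun m ↦ (I m).toIdeal) m).trans hn)⟩

end Converse

theorem noetherian_iff_countable_directSum_of_injectives_injective_general
    {G R : Type} [AddCommGroup G] [CommRing R] (𝒜 : G → AddSubgroup R) (h𝒜 : IsGradedRing 𝒜) :
    List.TFAE [
      ∀ I : ℕ → Ideal R, (∀ n, IsGradedIdeal 𝒜 (I n)) → Monotone I → ∃ n, ∀ m, n ≤ m → I m = I n,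
      ∀ (ι : Type) (N : ι → Type) [∀ i, AddCommGroup (N i)] [∀ i, Module R (N i)],
        ∀ 𝒩 : ∀ i, G → AddSubgroup (N i), (∀ i, IsGradedModule 𝒜 (𝒩 i)) →
          (∀ i, IsInjectiveGradedModule 𝒜 (𝒩 i)) →
            IsInjectiveGradedModule 𝒜 (directSumGrading 𝒩),
      ∀ (N : ℕ → Type) [∀ i, AddCommGroup (N i)] [∀ i, Module R (N i)],
        ∀ 𝒩 : ∀ i, G → AddSubgroup (N i), (∀ i, IsGradedModule 𝒜 (𝒩 i)) →
          (∀ i, IsInjectiveGradedModule 𝒜 (𝒩 i)) →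
            IsInjectiveGradedModule 𝒜 (directSumGrading 𝒩)] := by
  classical
  obtain ⟨_⟩ := h𝒜.nonempty_gradedRing
  rw [gradedIdeal_chain_condition_iff_wellFoundedGT]
  tfae_have 1 → 2 := fun _ _ _ _ _ _ ↦ isInjectiveGradedModule_directSumGrading
  tfae_have 2 → 3 := fun h ↦ h ℕ
  tfae_have 3 → 1 := wellFoundedGT_homogeneousIdeal_of_isInjective_directSumGrading
  tfae_finish

/-- **Statement 10** (graded Chase/Bass–Papp criterion): a `G`-graded commutative ring is
noetherian (ascending chains of graded ideals are stationary) if and only if countable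
direct sums of injective graded modules are injective. -/
theorem noetherian_iff_countable_directSum_of_injectives_injective
    {G R : Type} [AddCommGroup G] [CommRing R]
    (𝒜 : G → AddSubgroup R) (h𝒜 : IsGradedRing 𝒜) :
    (∀ I : ℕ → Ideal R, (∀ n, IsGradedIdeal 𝒜 (I n)) → Monotone I →
        ∃ n, ∀ m, n ≤ m → I m = I n) ↔
      (∀ (N : ℕ → Type) [∀ i, AddCommGroup (N i)] [∀ i, Module R (N i)],
        ∀ 𝒩 : ∀ i, G → AddSubgroup (N i), (∀ i, IsGradedModule 𝒜 (𝒩 i)) →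
          (∀ i, IsInjectiveGradedModule 𝒜 (𝒩 i)) →
            IsInjectiveGradedModule 𝒜 (directSumGrading 𝒩)) :=
  (noetherian_iff_countable_directSum_of_injectives_injective_general 𝒜 h𝒜).out 0 2
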